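/- Let M ≥ 3 and let A = diag(a_1, a_2, ..., a_M) be a diagonal M×M real matrix. If the inequality D(m) O A O^{−1} ŷ_init ≥ 0 (elementwise) holds for every composition m of M, every Variant II initial codeword ŷ_init compatible with m, and every permutation matrix O, then A = aI_M for some a ≥ 0; that is, all diagonal entries of A are equal and nonnegative. -/

import Mathlib

/-- `D(m) z ≥ 0` elementwise: `z` is `m`-descending. -/
def DescIneq {M : ℕ} (c : Composition M) (z : Fin M → ℝ) : Prop :=
  ∀ k ℓ : Fin M, (c.index k : ℕ) + 1 = (c.index ℓ : ℕ) → z ℓ ≤ z k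

/-- A Variant II initial codeword compatible with the composition `m`. -/
def VarIICodeword {M : ℕ} (c : Composition M) (y : Fin M → ℝ) : Prop :=
  (∀ k ℓ : Fin M, c.index k = c.index ℓ → y k = y ℓ) ∧
  (∀ k ℓ : Fin M, (c.index k : ℕ) < (c.index ℓ : ℕ) → y ℓ < y k) ∧
  (∀ k : Fin M, 0 ≤ y k)

theorem ones_index_val {M : ℕ} (k : Fin M) : ((Composition.ones M).index k : ℕ) = k := by
  have h1 := (Composition.ones M).sizeUpTo_index_le k
  have h2 := (Composition.ones M).lt_sizeUpTo_index_succ k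
  have h3 : ((Composition.ones M).index k : ℕ) < M :=
    lt_of_lt_of_eq ((Composition.ones M).index k).2 (Composition.ones_length M)
  rw [Composition.ones_sizeUpTo] at h1 h2
  rw [Fin.val_succ] at h2
  omega

open Matrix in
/-- If `M ≥ 3`, `A = diag(a_1, …, a_M)` is diagonal, and `D(m) O A O⁻¹ ŷ_init ≥ 0` holds for
every composition `m` of `M`, every Variant II initial codeword `ŷ_init` compatible with `m`
and every permutation matrix `O`, then `A = aI_M` for some `a ≥ 0`. -/
theorem stmt17 {M : ℕ} (hM : 3 ≤ M) (d : Fin M → ℝ)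
    (h : ∀ (c : Composition M) (y : Fin M → ℝ), VarIICodeword c y →
      ∀ σ : Equiv.Perm (Fin M),
        DescIneq c (((σ.permMatrix ℝ) * Matrix.diagonal d * ((σ⁻¹).permMatrix ℝ)) *ᵥ y)) :
    ∃ a : ℝ, 0 ≤ a ∧ Matrix.diagonal d = a • (1 : Matrix (Fin M) (Fin M) ℝ) := by
  have hMr : (3 : ℝ) ≤ M := by exact_mod_cast hM
  let o : Fin M := ⟨0, by omega⟩
  let p : Fin M := ⟨1, by omega⟩
  have hop : p ≠ o := by simp [o, p]
  have key : ∀ i j : Fin M, i ≠ j → ∀ t : ℝ, 0 < t →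
      d j * ((M : ℝ) - 1) ≤ d i * ((M : ℝ) - 1 + t) := by
    intro i j hij t ht
    let y : Fin M → ℝ := fun k => if (k : ℕ) = 0 then (M : ℝ) - 1 + t else (M : ℝ) - (k : ℕ)
    have hy : VarIICodeword (Composition.ones M) y := by
      refine ⟨?_, ?_, ?_⟩
      · intro k l hkl
        have : k = l := by
          apply Fin.ext
          rw [← ones_index_val k, hkl, ones_index_val]
        rw [this]
      · intro k l hkl
        rw [ones_index_val, ones_index_val] at hkl
        have hl : (l : ℕ) ≠ 0 := by omega
        have hl1 : (1 : ℝ) ≤ (l : ℕ) := by exact_mod_cast Nat.one_le_iff_ne_zero.2 hl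
        have hkl' : ((k : ℕ) : ℝ) < (l : ℕ) := by exact_mod_cast hkl
        simp only [y, if_neg hl]
        split_ifs <;> linarith
      · intro k
        have : ((k : ℕ) : ℝ) < M := by exact_mod_cast k.2
        simp only [y]
        split_ifs <;> linarith
    let x := Equiv.swap o i p
    have hx : x ≠ i := by
      intro hx
      apply hop
      apply (Equiv.swap o i).injective
      rw [Equiv.swap_apply_left]; exact hx
    let σ : Equiv.Perm (Fin M) := Equiv.swap x j * Equiv.swap o i
    have h0 : σ o = i := by
      simp only [σ, Equiv.Perm.mul_apply, Equiv.swap_apply_left]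
      exact Equiv.swap_apply_of_ne_of_ne hx.symm hij
    have h1 : σ p = j := by
      simp only [σ, Equiv.Perm.mul_apply]
      exact Equiv.swap_apply_left _ _
    have hz : ∀ k, (((σ.permMatrix ℝ) * Matrix.diagonal d * ((σ⁻¹).permMatrix ℝ)) *ᵥ y) k
        = d (σ k) * y k := by
      intro k
      rw [← Matrix.mulVec_mulVec, ← Matrix.mulVec_mulVec, Matrix.permMatrix_mulVec,
        Matrix.permMatrix_mulVec]
      simp [Matrix.mulVec_diagonal]
    have := h _ y hy σ o p (by rw [ones_index_val, ones_index_val])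
    rw [hz, hz, h0, h1] at this
    simpa [y, o, p] using this
  have hle : ∀ i j : Fin M, i ≠ j → d j ≤ d i := by
    intro i j hij
    have : d j * ((M : ℝ) - 1) ≤ d i * ((M : ℝ) - 1) := by
      apply le_of_forall_pos_le_add
      intro ε hε
      have hp : 0 < |d i| + 1 := by positivity
      have h1 := key i j hij (ε / (|d i| + 1)) (by positivity)
      have h2 : d i * (ε / (|d i| + 1)) ≤ (|d i| + 1) * (ε / (|d i| + 1)) := by
        apply mul_le_mul_of_nonneg_right _ (by positivity)
        linarith [le_abs_self (d i)]
      rw [mul_div_cancel₀ _ hp.ne'] at h2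
      linarith
    exact le_of_mul_le_mul_right this (by linarith)
  have heq : ∀ i, d i = d o := by
    intro i
    by_cases hi : i = o
    · rw [hi]
    · exact le_antisymm (hle _ _ (Ne.symm hi)) (hle _ _ hi)
  refine ⟨d o, ?_, ?_⟩
  · have := key o p hop.symm 1 one_pos
    rw [heq p] at this
    linarith
  · rw [Matrix.smul_one_eq_diagonal]
    congr 1
    funext i
    exact heq i
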